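/- Let p be a prime and F a finite extension of ℚ_p, with fixed algebraic closure Ω. Let |M(4)| be the number of intermediate fields F ⊆ L ⊆ Ω with [L:F] = 4, and let |Ab(4)| be the number of such L that are abelian Galois extensions of F. Then |M(4)| = |Ab(4)| + 4·ν(F,D₈) + 4·ν(F,A₄) + 4·ν(F,S₄), where D₈ denotes the dihedral group of order 8 (a 2-Sylow subgroup of S₄). -/

import Mathlib

/-- `nu F G` is the number of intermediate fields `K` of a fixed algebraic closure of `F`
such that `K/F` is a finite Galois extension with Galois group isomorphic to `G`. -/
noncomputable def nu (F : Type*) [Field F] (G : Type*) [Group G] : ℕ :=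
  Nat.card {K : IntermediateField F (AlgebraicClosure F) //
    FiniteDimensional F K ∧ IsGalois F K ∧ Nonempty ((K ≃ₐ[F] K) ≃* G)}

/-!
By the Galois correspondence, the quartic extensions `L / F` with a given normal closure `K`
correspond to the core-free subgroups of index four in `Gal(K/F)`. A group with such a subgroup is a
transitive subgroup of `S₄`, so its order is 4, 8, 12 or 24, and an order other than 4 determines
it: the group is a Sylow 2-subgroup of `S₄`, `A₄` or `S₄`. Order 4 means that `L` is its own normal
closure, hence abelian over `F`. Each of `D₈`, `A₄` and `S₄` has exactly four core-free subgroups of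
index four: the subgroups generated by a reflection, respectively the point stabilisers.

There are only finitely many quartic extensions, because the quartic formula places them all in one
tower of radical extensions of `F`, and each step of the tower has finite degree because
`Kˣ / (Kˣ)ⁿ` is finite for a finite extension `K` of `ℚ_p`.
-/

/-! ### Core-free subgroups -/

/-- The core-free subgroups of index `n` of `G`: for `n ≠ 0`, these are the point stabilisers that
arise when `G` is realised as a transitive permutation group of degree `n`. As always with
`Subgroup.index`, `n = 0` stands for infinite index. -/
def coreFreeSubgroups (G : Type*) [Group G] (n : ℕ) : Set (Subgroup G) :=
  {H | H.index = n ∧ H.normalCore = ⊥}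

section Groups

variable {G G' : Type*} [Group G] [Group G']

theorem normalCore_map_mulEquiv (e : G ≃* G') (H : Subgroup G) :
    (H.map (e : G →* G')).normalCore = H.normalCore.map (e : G →* G') := by
  ext x
  refine Iff.trans ?_ (Subgroup.mem_map_equiv (f := e) (K := H.normalCore)).symm
  refine (forall_congr' fun b => Subgroup.mem_map_equiv (f := e)).trans ?_
  simp only [map_mul, map_inv]
  exact e.symm.surjective.forall (p := fun b => b * e.symm x * b⁻¹ ∈ H).symm

theorem map_mem_coreFreeSubgroups_iff (e : G ≃* G') {n : ℕ} {H : Subgroup G} :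
    H.map (e : G →* G') ∈ coreFreeSubgroups G' n ↔ H ∈ coreFreeSubgroups G n := by
  change _ = n ∧ _ = ⊥ ↔ _ = n ∧ _ = ⊥
  rw [Subgroup.index_map_equiv, normalCore_map_mulEquiv,
    Subgroup.map_eq_bot_iff_of_injective _ e.injective]

/-- The bijection between the core-free subgroups of index `n` of two isomorphic groups given by
transport along the isomorphism. -/
def coreFreeSubgroupsCongr (e : G ≃* G') (n : ℕ) :
    coreFreeSubgroups G n ≃ coreFreeSubgroups G' n :=
  e.mapSubgroup.toEquiv.subtypeEquiv fun _ => (map_mem_coreFreeSubgroups_iff e).symm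

theorem exists_injective_perm_of_mem_coreFreeSubgroups {n : ℕ} (hn : n ≠ 0) {H : Subgroup G}
    (hH : H ∈ coreFreeSubgroups G n) :
    ∃ φ : G →* Equiv.Perm (Fin n), Function.Injective φ := by
  have hcard : Nat.card (G ⧸ H) = n := hH.1
  have : Finite (G ⧸ H) := Nat.finite_of_card_ne_zero (hcard.trans_ne hn)
  have hker : Function.Injective (MulAction.toPermHom G (G ⧸ H)) := by
    rw [← MonoidHom.ker_eq_bot_iff, ← Subgroup.normalCore_eq_ker, hH.2]
  let e := (Finite.equivFinOfCardEq hcard).permCongrHom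
  exact ⟨e.toMonoidHom.comp (MulAction.toPermHom G (G ⧸ H)), e.injective.comp hker⟩

theorem card_perm_fin_four : Nat.card (Equiv.Perm (Fin 4)) = 24 := by
  rw [Nat.card_perm, Nat.card_fin]
  rfl

theorem card_mem_of_mem_coreFreeSubgroups_four {H : Subgroup G} (hH : H ∈ coreFreeSubgroups G 4) :
    Nat.card G ∈ ({4, 8, 12, 24} : Finset ℕ) := by
  obtain ⟨φ, hφ⟩ := exists_injective_perm_of_mem_coreFreeSubgroups four_ne_zero hH
  have hdvd : Nat.card G ∣ 24 := card_perm_fin_four ▸ Subgroup.card_dvd_of_injective φ hφ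
  have h4 : 4 ∣ Nat.card G := hH.1 ▸ H.index_dvd_card
  have hle : Nat.card G ≤ 24 := Nat.le_of_dvd (by norm_num) hdvd
  generalize Nat.card G = m at *
  simp only [Finset.mem_insert, Finset.mem_singleton]
  interval_cases m <;> omega

theorem nonempty_mulEquiv_of_subgroup_perm_four {A B : Subgroup (Equiv.Perm (Fin 4))}
    (hA : Nat.card A ∈ ({8, 12, 24} : Finset ℕ)) (hAB : Nat.card A = Nat.card B) :
    Nonempty (A ≃* B) := by
  have : Fact (Nat.Prime 2) := ⟨Nat.prime_two⟩
  have hSylow : 8 = 2 ^ (Nat.card (Equiv.Perm (Fin 4))).factorization 2 := by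
    rw [card_perm_fin_four, show 24 = 2 ^ 3 * 3 from rfl,
      Nat.factorization_mul_apply_of_coprime (by norm_num), Nat.prime_two.factorization_pow,
      Nat.prime_three.factorization]
    simp
  have hindexA := A.card_mul_index
  have hindexB := B.card_mul_index
  rw [← hAB] at hindexB
  rw [card_perm_fin_four] at hindexA hindexB
  simp only [Finset.mem_insert, Finset.mem_singleton] at hA
  rcases hA with h | h | h <;> rw [h] at hAB hindexA hindexB
  · exact ⟨(Sylow.ofCard A (h.trans hSylow)).equiv (Sylow.ofCard B (hAB.symm.trans hSylow))⟩
  · rw [Equiv.Perm.eq_alternatingGroup_of_index_eq_two (G := A) (by omega),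
      Equiv.Perm.eq_alternatingGroup_of_index_eq_two (G := B) (by omega)]
    exact ⟨MulEquiv.refl _⟩
  · rw [Subgroup.index_eq_one.1 (show A.index = 1 by omega),
      Subgroup.index_eq_one.1 (show B.index = 1 by omega)]
    exact ⟨MulEquiv.refl _⟩

theorem nonempty_mulEquiv_of_mem_coreFreeSubgroups_four {H : Subgroup G} {H' : Subgroup G'}
    (hH : H ∈ coreFreeSubgroups G 4) (hH' : H' ∈ coreFreeSubgroups G' 4)
    (hcard : Nat.card G = Nat.card G') (hne : Nat.card G ≠ 4) : Nonempty (G ≃* G') := by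
  obtain ⟨φ, hφ⟩ := exists_injective_perm_of_mem_coreFreeSubgroups four_ne_zero hH
  obtain ⟨ψ, hψ⟩ := exists_injective_perm_of_mem_coreFreeSubgroups four_ne_zero hH'
  have hrφ := Nat.card_congr (MonoidHom.ofInjective hφ).toEquiv
  have hrψ := Nat.card_congr (MonoidHom.ofInjective hψ).toEquiv
  have hmem := card_mem_of_mem_coreFreeSubgroups_four hH
  obtain ⟨e⟩ := nonempty_mulEquiv_of_subgroup_perm_four (A := φ.range) (B := ψ.range)
    (hrφ ▸ (Finset.mem_insert.1 hmem).resolve_left hne) (by rw [← hrφ, ← hrψ, hcard])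
  exact ⟨((MonoidHom.ofInjective hφ).trans e).trans (MonoidHom.ofInjective hψ).symm⟩

open MulAction

variable {X : Type*} [MulAction G X]

theorem stabilizer_mem_coreFreeSubgroups [FaithfulSMul G X] [IsPretransitive G X] (x : X) :
    stabilizer G x ∈ coreFreeSubgroups G (Nat.card X) := by
  refine ⟨index_stabilizer_of_transitive G x, (Subgroup.eq_bot_iff_forall _).2 fun g hg => ?_⟩
  refine FaithfulSMul.eq_of_smul_eq_smul (α := X) fun y => ?_
  obtain ⟨h, rfl⟩ := exists_smul_eq G x y
  have hconj : (h⁻¹ * g * h⁻¹⁻¹) • x = x := hg h⁻¹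
  rw [inv_inv, mul_smul, mul_smul, inv_smul_eq_iff] at hconj
  rw [hconj, one_smul]

theorem card_modEq_ncard_fixedBy {p : ℕ} [Fact p.Prime] {g : G} (hg : orderOf g = p) (X : Type*)
    [MulAction G X] [Finite X] : Nat.card X ≡ (fixedBy X g).ncard [MOD p] := by
  have hP : IsPGroup p (Subgroup.zpowers g) :=
    .of_card (n := 1) (by rw [Nat.card_zpowers, hg, pow_one])
  have hfix : fixedPoints (Subgroup.zpowers g) X = fixedBy X g := by
    ext x
    simp only [mem_fixedPoints, mem_fixedBy, Subtype.forall, Subgroup.mk_smul]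
    exact ⟨fun h => h g (Subgroup.mem_zpowers g), fun h _ hk =>
      Subgroup.zpowers_le.2 (show g ∈ stabilizer G x from h) hk⟩
  rw [← Nat.card_coe_set_eq, ← hfix]
  exact hP.card_modEq_card_fixedPoints X

theorem exists_fixedBy_eq_singleton [FaithfulSMul G X] (hX : Nat.card X = 4) {g : G}
    (hg : orderOf g = 3) : ∃ x : X, fixedBy X g = {x} := by
  have : Fact (Nat.Prime 3) := ⟨Nat.prime_three⟩
  have : Finite X := Nat.finite_of_card_ne_zero (by omega)
  have hmod := card_modEq_ncard_fixedBy hg X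
  have hne : (fixedBy X g).ncard ≠ 4 := by
    intro h
    have huniv : fixedBy X g = Set.univ := Set.eq_univ_iff_ncard _ |>.2 (h.trans hX.symm)
    have hg1 : g = 1 := by rwa [fixedBy_eq_univ_iff_eq_one] at huniv
    rw [hg1, orderOf_one] at hg
    omega
  have hle := Set.ncard_le_card (fixedBy X g)
  rw [Nat.ModEq] at hmod
  exact Set.ncard_eq_one.1 (by omega)

-- An element of order three fixes exactly one point, whose `G`-orbit then has size congruent to 1
-- modulo 3; size 4 being excluded, the orbit is a single point.
theorem exists_fixedPoints_eq_singleton [FaithfulSMul G X] (hX : Nat.card X = 4)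
    (h3 : 3 ∣ Nat.card G) (h4 : ¬ 4 ∣ Nat.card G) : ∃ x : X, fixedPoints G X = {x} := by
  have : Fact (Nat.Prime 3) := ⟨Nat.prime_three⟩
  have : Finite X := Nat.finite_of_card_ne_zero (by omega)
  have : Finite G := Nat.finite_of_card_ne_zero fun h => h4 (h ▸ dvd_zero 4)
  obtain ⟨g, hg⟩ := exists_prime_orderOf_dvd_card' 3 h3
  obtain ⟨x, hx⟩ := exists_fixedBy_eq_singleton hX hg
  have hgx (y : X) : g • y = y ↔ y = x := by
    rw [← mem_fixedBy, hx, Set.mem_singleton_iff]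
  refine ⟨x, Set.eq_singleton_iff_unique_mem.2 ⟨?_, fun y hy => (hgx y).1 (hy g)⟩⟩
  have hone : (fixedBy (orbit G x) g).ncard = 1 := by
    refine Set.ncard_eq_one.2 ⟨⟨x, mem_orbit_self x⟩, ?_⟩
    ext y
    rw [mem_fixedBy, Set.mem_singleton_iff, ← Subtype.coe_inj, orbit.coe_smul, hgx,
      ← Subtype.coe_inj]
  have hmod := hone ▸ card_modEq_ncard_fixedBy hg (orbit G x)
  have hdvd : Nat.card (orbit G x) ∣ Nat.card G := by
    rw [Nat.card_coe_set_eq, ← index_stabilizer]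
    exact Subgroup.index_dvd_card _
  have hle : Nat.card (orbit G x) ≤ 4 := by
    rw [← hX, Nat.card_coe_set_eq]
    exact Set.ncard_le_card _
  have horbit : Nat.card (orbit G x) = 1 := by
    have hne : Nat.card (orbit G x) ≠ 4 := fun h => h4 (h ▸ hdvd)
    rw [Nat.ModEq] at hmod
    omega
  rw [← subsingleton_orbit_iff_mem_fixedPoints, ← Set.subsingleton_coe]
  exact (Nat.card_eq_one_iff_unique.1 horbit).1

theorem card_coreFreeSubgroups_four [FaithfulSMul G X] [IsPretransitive G X] (hX : Nat.card X = 4)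
    (h3 : 3 ∣ Nat.card G) : Nat.card (coreFreeSubgroups G 4) = 4 := by
  have hstab (x : X) : stabilizer G x ∈ coreFreeSubgroups G 4 :=
    hX ▸ stabilizer_mem_coreFreeSubgroups x
  have hfixed {H : Subgroup G} (hH : H ∈ coreFreeSubgroups G 4) :
      ∃ x : X, fixedPoints H X = {x} := by
    have hG := card_mem_of_mem_coreFreeSubgroups_four hH
    have hcard := H.card_mul_index
    rw [hH.1] at hcard
    simp only [Finset.mem_insert, Finset.mem_singleton] at hG
    exact exists_fixedPoints_eq_singleton hX (by omega) (by omega)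
  have hbij : Function.Bijective fun x : X => (⟨_, hstab x⟩ : coreFreeSubgroups G 4) := by
    refine ⟨fun x y hxy => ?_, fun ⟨H, hH⟩ => ?_⟩
    · obtain ⟨z, hz⟩ := hfixed (hstab x)
      have hx : x ∈ fixedPoints (stabilizer G x) X := fun g => g.2
      have hy : y ∈ fixedPoints (stabilizer G x) X := fun g => by
        have := Subtype.ext_iff.1 hxy
        simp only at this
        exact this.le g.2
      rw [hz, Set.mem_singleton_iff] at hx hy
      rw [hx, hy]
    · obtain ⟨x, hx⟩ := hfixed hH
      have hfix : x ∈ fixedPoints H X := hx ▸ Set.mem_singleton x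
      have hle : H ≤ stabilizer G x := fun g hg => hfix ⟨g, hg⟩
      refine ⟨x, Subtype.ext (Eq.symm ?_)⟩
      have hmul := Subgroup.relIndex_mul_index hle
      rw [hH.1, (hstab x).1] at hmul
      exact hle.antisymm (Subgroup.relIndex_eq_one.1 (by omega))
  rw [← Nat.card_congr (Equiv.ofBijective _ hbij), hX]

theorem card_coreFreeSubgroups_perm_four :
    Nat.card (coreFreeSubgroups (Equiv.Perm (Fin 4)) 4) = 4 :=
  card_coreFreeSubgroups_four (X := Fin 4) (by simp) (by rw [card_perm_fin_four]; norm_num)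

theorem card_alternatingGroup_fin_four : Nat.card (alternatingGroup (Fin 4)) = 12 := by
  rw [nat_card_alternatingGroup, Nat.card_fin]
  rfl

theorem card_coreFreeSubgroups_alternating_four :
    Nat.card (coreFreeSubgroups (alternatingGroup (Fin 4)) 4) = 4 :=
  have := alternatingGroup.isPretransitive_of_three_le_card (Fin 4) (by simp)
  card_coreFreeSubgroups_four (X := Fin 4) (by simp)
    (by rw [card_alternatingGroup_fin_four]; norm_num)

end Groups

section Dihedral

open DihedralGroup

variable {n : ℕ}

theorem r_mem_normalCore {H : Subgroup (DihedralGroup n)} {i : ZMod n} (hi : r i ∈ H) :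
    r i ∈ H.normalCore := by
  rintro (j | j)
  · rwa [r_mul_r, inv_r, r_mul_r, add_comm j, add_neg_cancel_right]
  · rw [sr_mul_r, inv_sr, sr_mul_sr, sub_add_cancel_left, ← inv_r]
    exact H.inv_mem hi

theorem mem_zpowers_sr {i : ZMod n} {x : DihedralGroup n} :
    x ∈ Subgroup.zpowers (sr i) ↔ x = 1 ∨ x = sr i := by
  have hfin : IsOfFinOrder (sr i) := orderOf_pos_iff.1 ((orderOf_sr i).symm ▸ two_pos)
  rw [hfin.mem_zpowers_iff_mem_range_orderOf, orderOf_sr]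
  simp [Finset.range_add_one, or_comm]

theorem exists_zpowers_sr_eq_of_mem_coreFreeSubgroups (hn : n ≠ 0)
    {H : Subgroup (DihedralGroup n)} (hH : H ∈ coreFreeSubgroups (DihedralGroup n) n) :
    ∃ i, Subgroup.zpowers (sr i) = H := by
  have hcard : Nat.card H = 2 := by
    have hmul := H.card_mul_index
    rw [hH.1, nat_card] at hmul
    exact Nat.eq_of_mul_eq_mul_right (Nat.pos_of_ne_zero hn) hmul
  have : Finite H := Nat.finite_of_card_ne_zero (by omega)
  have hH1 : H ≠ ⊥ := H.one_lt_card_iff_ne_bot.1 (by omega)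
  obtain ⟨x | x, hx, hx1⟩ := H.bot_or_exists_ne_one.resolve_left hH1
  · exact absurd ((Subgroup.eq_bot_iff_forall _).1 hH.2 _ (r_mem_normalCore hx)) hx1
  · refine ⟨x, Subgroup.eq_of_le_of_card_ge (Subgroup.zpowers_le.2 hx) ?_⟩
    rw [hcard, Nat.card_zpowers, orderOf_sr]

theorem zpowers_sr_mem_coreFreeSubgroups (hn : 3 ≤ n) (i : ZMod n) :
    Subgroup.zpowers (sr i) ∈ coreFreeSubgroups (DihedralGroup n) n := by
  constructor
  · have hmul := (Subgroup.zpowers (sr i)).card_mul_index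
    rw [Nat.card_zpowers, orderOf_sr, nat_card] at hmul
    omega
  · refine (Subgroup.eq_bot_iff_forall _).2 fun x hx => ?_
    refine (mem_zpowers_sr.1 (Subgroup.normalCore_le _ hx)).resolve_right ?_
    rintro rfl
    have hconj := mem_zpowers_sr.1 (hx (r 1))
    rw [r_mul_sr, inv_r, sr_mul_r, one_def] at hconj
    have h2 : ((2 : ℕ) : ZMod n) = 0 := by
      have hi := sr.inj (hconj.resolve_left nofun)
      push_cast
      linear_combination -hi
    exact absurd (Nat.le_of_dvd two_pos ((ZMod.natCast_eq_zero_iff _ _).1 h2)) (by omega)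

theorem card_coreFreeSubgroups_dihedral (hn : 3 ≤ n) :
    Nat.card (coreFreeSubgroups (DihedralGroup n) n) = n := by
  let f (i : ZMod n) : coreFreeSubgroups (DihedralGroup n) n :=
    ⟨_, zpowers_sr_mem_coreFreeSubgroups hn i⟩
  have hf : Function.Bijective f := by
    refine ⟨fun i j hij => ?_, fun ⟨H, hH⟩ => ?_⟩
    · have hzpowers : Subgroup.zpowers (sr i) = Subgroup.zpowers (sr j) := congrArg Subtype.val hij
      have hmem : sr i ∈ Subgroup.zpowers (sr j) := hzpowers ▸ Subgroup.mem_zpowers (sr i)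
      exact sr.inj ((mem_zpowers_sr.1 hmem).resolve_left nofun)
    · obtain ⟨i, hi⟩ := exists_zpowers_sr_eq_of_mem_coreFreeSubgroups (by omega) hH
      exact ⟨i, Subtype.ext hi⟩
  rw [← Nat.card_congr (Equiv.ofBijective f hf), Nat.card_zmod]

end Dihedral

/-! ### Galois correspondence and normal closures -/

section Galois
open Module IntermediateField

variable {F Ω : Type*} [Field F] [Field Ω] [Algebra F Ω]

theorem fixingSubgroup_normalClosure [IsGalois F Ω] (E : IntermediateField F Ω) :
    (normalClosure F E Ω).fixingSubgroup = E.fixingSubgroup.normalCore := by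
  refine le_antisymm ?_ ?_
  · exact Subgroup.normal_le_normalCore.2 (fixingSubgroup_antitone (le_normalClosure E))
  · rw [← IntermediateField.le_iff_le, normalClosure_le_iff_of_normal, IntermediateField.le_iff_le]
    exact Subgroup.normalCore_le _

theorem lift_normalClosure [Normal F Ω] {K : IntermediateField F Ω} [Normal F K]
    (E : IntermediateField F K) :
    lift (normalClosure F E K) = normalClosure F (lift E) Ω := by
  refine le_antisymm ?_ ?_
  · have hK : normalClosure F (lift E) Ω ≤ K :=
      (normalClosure_le_iff_of_normal).2 (lift_le E)
    have : Normal F (restrict hK) := .of_algEquiv (restrictAlgEquiv hK)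
    rw [← lift_restrict hK]
    refine map_mono K.val (normalClosure_le_iff_of_normal.2 fun x hx => ?_)
    exact (mem_restrict hK x).2 (le_normalClosure (lift E) ((mem_lift x).2 hx))
  · have : Normal F (lift (normalClosure F E K)) := .of_algEquiv (liftAlgEquiv _)
    exact normalClosure_le_iff_of_normal.2 (map_mono K.val (le_normalClosure E))

variable {K : IntermediateField F Ω} [FiniteDimensional F K] [IsGalois F K]

theorem fixingSubgroup_mem_coreFreeSubgroups_iff [Normal F Ω] {n : ℕ}
    {E : IntermediateField F K} :
    E.fixingSubgroup ∈ coreFreeSubgroups Gal(K/F) n ↔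
      finrank F (lift E) = n ∧ normalClosure F (lift E) Ω = K := by
  have hfinrank : finrank F (lift E) = E.fixingSubgroup.index := by
    rw [← (liftAlgEquiv E).toLinearEquiv.finrank_eq, finrank_eq_fixingSubgroup_index]
  have hinjective : Function.Injective (fixingSubgroup (F := F) (E := K)) :=
    Function.LeftInverse.injective (g := fixedField) fun E => IsGalois.fixedField_fixingSubgroup E
  have hclosure : normalClosure F (lift E) Ω = K ↔ E.fixingSubgroup.normalCore = ⊥ := by
    rw [← lift_normalClosure, ← fixingSubgroup_normalClosure, ← fixingSubgroup_top,
      hinjective.eq_iff, ← lift_inj, lift_top]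
  rw [hfinrank, hclosure]
  rfl

/-- The Galois correspondence between the intermediate fields of degree `n` over `F` with normal
closure `K` and the core-free subgroups of index `n` of `Gal(K/F)`. -/
noncomputable def normalClosureEqEquiv [Normal F Ω] (K : IntermediateField F Ω)
    [FiniteDimensional F K] [IsGalois F K] (n : ℕ) :
    {L : IntermediateField F Ω // finrank F L = n ∧ normalClosure F L Ω = K} ≃
      coreFreeSubgroups Gal(K/F) n where
  toFun L := ⟨(restrict ((le_normalClosure L.1).trans L.2.2.le)).fixingSubgroup, by
    rw [fixingSubgroup_mem_coreFreeSubgroups_iff, lift_restrict]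
    exact L.2⟩
  invFun H := ⟨lift (fixedField H.1), fixingSubgroup_mem_coreFreeSubgroups_iff.1
    (by rw [fixingSubgroup_fixedField]; exact H.2)⟩
  left_inv L := Subtype.ext <|
    (congrArg lift (IsGalois.fixedField_fixingSubgroup _)).trans (lift_restrict _)
  right_inv H := Subtype.ext <| by
    have hle : lift (fixedField H.1) ≤ K := lift_le _
    have hrestrict : restrict hle = fixedField H.1 := lift_injective K (lift_restrict hle)
    exact (congrArg _ hrestrict).trans (fixingSubgroup_fixedField H.1)

/-- `HasGaloisGroup G K` says that `K` is a finite Galois extension of the base field with Galois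
group isomorphic to `G`; these are the fields that `nu` counts. -/
def HasGaloisGroup (G : Type*) [Group G] (K : IntermediateField F Ω) : Prop :=
  FiniteDimensional F K ∧ IsGalois F K ∧ Nonempty ((K ≃ₐ[F] K) ≃* G)

theorem card_finrank_eq_and_hasGaloisGroup [Normal F Ω] (G : Type*) [Group G] (n : ℕ) :
    Nat.card {L : IntermediateField F Ω //
        finrank F L = n ∧ HasGaloisGroup G (normalClosure F L Ω)} =
      Nat.card (coreFreeSubgroups G n) *
        Nat.card {K : IntermediateField F Ω // HasGaloisGroup G K} := by
  let fiber (K : {K : IntermediateField F Ω // HasGaloisGroup G K}) :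
      {L : IntermediateField F Ω // finrank F L = n ∧ normalClosure F L Ω = K} ≃
        coreFreeSubgroups G n :=
    have := K.2.1
    have := K.2.2.1
    (normalClosureEqEquiv K.1 n).trans (coreFreeSubgroupsCongr K.2.2.2.some n)
  let toClosure (L : {L : IntermediateField F Ω //
      finrank F L = n ∧ HasGaloisGroup G (normalClosure F L Ω)}) :
      {K : IntermediateField F Ω // HasGaloisGroup G K} := ⟨normalClosure F L.1 Ω, L.2.2⟩
  let fiberEquiv (K : {K : IntermediateField F Ω // HasGaloisGroup G K}) :
      {L // toClosure L = K} ≃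
        {L : IntermediateField F Ω // finrank F L = n ∧ normalClosure F L Ω = K} :=
    { toFun L := ⟨L.1.1, L.1.2.1, congrArg Subtype.val L.2⟩
      invFun L := ⟨⟨L.1, L.2.1, L.2.2.symm ▸ K.2⟩, Subtype.ext L.2.2⟩
      left_inv _ := rfl
      right_inv _ := rfl }
  rw [mul_comm, ← Nat.card_prod]
  exact Nat.card_congr <| (Equiv.sigmaFiberEquiv toClosure).symm.trans <|
    (Equiv.sigmaCongrRight fun K => (fiberEquiv K).trans (fiber K)).trans (Equiv.sigmaEquivProd _ _)

theorem nonempty_coreFreeSubgroups_gal_normalClosure [IsGalois F Ω] {n : ℕ} (hn : n ≠ 0)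
    {L : IntermediateField F Ω} (hL : finrank F L = n) :
    (coreFreeSubgroups Gal(normalClosure F L Ω/F) n).Nonempty :=
  have := FiniteDimensional.of_finrank_pos (hL ▸ Nat.pos_of_ne_zero hn)
  ⟨_, (normalClosureEqEquiv (normalClosure F L Ω) n ⟨L, hL, rfl⟩).2⟩

end Galois

theorem card_eq_sum_card_fiber {α β : Type*} {p : α → Prop} [Finite {a // p a}] {f : α → β}
    {t : Finset β} (hf : ∀ a, p a → f a ∈ t) :
    Nat.card {a // p a} = ∑ b ∈ t, Nat.card {a // p a ∧ f a = b} := by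
  have (b : t) : Finite {a // p a ∧ f a = b} :=
    .of_injective _ (Subtype.impEmbedding (fun a => p a ∧ f a = b) p fun _ h => h.1).injective
  rw [← Finset.sum_coe_sort, ← Nat.card_sigma]
  exact Nat.card_congr
    { toFun a := ⟨⟨f a, hf a a.2⟩, a, a.2, rfl⟩
      invFun a := ⟨a.2, a.2.2.1⟩
      left_inv _ := rfl
      right_inv a := Sigma.subtype_ext (Subtype.ext a.2.2.2) rfl }

section Quartic

open Module IntermediateField

variable {F Ω : Type*} [Field F] [Field Ω] [Algebra F Ω] [IsGalois F Ω]
  {L : IntermediateField F Ω}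

theorem finrank_normalClosure_mem (hL : finrank F L = 4) :
    finrank F (normalClosure F L Ω) ∈ ({4, 8, 12, 24} : Finset ℕ) := by
  have : FiniteDimensional F L := .of_finrank_pos (by omega)
  obtain ⟨H, hH⟩ := nonempty_coreFreeSubgroups_gal_normalClosure four_ne_zero hL
  rw [← IsGalois.card_aut_eq_finrank]
  exact card_mem_of_mem_coreFreeSubgroups_four hH

theorem hasGaloisGroup_normalClosure_iff {G : Type*} [Group G]
    (hG : (coreFreeSubgroups G 4).Nonempty) (hG4 : Nat.card G ≠ 4) (hL : finrank F L = 4) :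
    HasGaloisGroup G (normalClosure F L Ω) ↔ finrank F (normalClosure F L Ω) = Nat.card G := by
  have : FiniteDimensional F L := .of_finrank_pos (by omega)
  rw [← IsGalois.card_aut_eq_finrank]
  refine ⟨fun ⟨_, _, ⟨e⟩⟩ => Nat.card_congr e.toEquiv, fun hcard => ?_⟩
  obtain ⟨H, hH⟩ := nonempty_coreFreeSubgroups_gal_normalClosure four_ne_zero hL
  obtain ⟨H', hH'⟩ := hG
  exact ⟨inferInstance, inferInstance,
    nonempty_mulEquiv_of_mem_coreFreeSubgroups_four hH hH' hcard (hcard.trans_ne hG4)⟩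

theorem finrank_normalClosure_eq_four_iff (hL : finrank F L = 4) :
    finrank F (normalClosure F L Ω) = 4 ↔
      IsGalois F L ∧ ∀ σ τ : L ≃ₐ[F] L, σ * τ = τ * σ := by
  have : FiniteDimensional F L := .of_finrank_pos (by omega)
  constructor
  · intro h
    have heq : L = normalClosure F L Ω :=
      eq_of_le_of_finrank_eq (le_normalClosure L) (hL.trans h.symm)
    have hGalois : IsGalois F L := heq ▸ inferInstance
    have : Fact (Nat.Prime 2) := ⟨Nat.prime_two⟩
    have hcomm := IsPGroup.isMulCommutative_of_card_eq_prime_sq (p := 2) (G := L ≃ₐ[F] L)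
      ((IsGalois.card_aut_eq_finrank F L).trans hL)
    exact ⟨hGalois, hcomm.is_comm.comm⟩
  · rintro ⟨_, -⟩
    rw [normalClosure_of_normal, hL]

theorem card_finrank_normalClosure_eq_card {G : Type*} [Group G]
    (hG : Nat.card (coreFreeSubgroups G 4) = 4) (hG4 : Nat.card G ≠ 4) :
    Nat.card {L : IntermediateField F Ω //
        finrank F L = 4 ∧ finrank F (normalClosure F L Ω) = Nat.card G} =
      4 * Nat.card {K : IntermediateField F Ω // HasGaloisGroup G K} := by
  have hne : (coreFreeSubgroups G 4).Nonempty :=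
    Set.nonempty_coe_sort.1 (Nat.card_pos_iff.1 (by omega)).1
  refine Eq.trans ?_ ((card_finrank_eq_and_hasGaloisGroup G 4).trans (by rw [hG]))
  exact Nat.card_congr <| Equiv.subtypeEquivRight fun L =>
    and_congr_right fun hL => (hasGaloisGroup_normalClosure_iff hne hG4 hL).symm

end Quartic

/-! ### Power classes of local fields -/

section PowerClasses

open Topology

variable {K : Type*} [NontriviallyNormedField K]

theorem isOpen_range_powMonoidHom_units [CompleteSpace K] {n : ℕ} (hn : (n : K) ≠ 0) :
    IsOpen ((powMonoidHom n : Kˣ →* Kˣ).range : Set Kˣ) := by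
  have hderiv : HasStrictDerivAt (fun x : K => x ^ n) n 1 := by
    simpa using hasStrictDerivAt_pow n (1 : K)
  have hpow : (· ^ n) '' {x : K | x ≠ 0} ∈ 𝓝 (1 : K) := by
    simpa [hderiv.map_nhds_eq hn] using
      Filter.image_mem_map (m := (· ^ n)) (isOpen_ne.mem_nhds (one_ne_zero (α := K)))
  refine Subgroup.isOpen_of_mem_nhds _ (g := 1) ?_
  filter_upwards [Units.continuous_val.continuousAt.preimage_mem_nhds hpow]
  rintro u ⟨x, hx, hxu⟩
  exact ⟨Units.mk0 x hx, Units.ext hxu⟩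

theorem isCompact_units_norm_mem_Icc [ProperSpace K] {r : ℝ} (hr : 0 < r) (R : ℝ) :
    IsCompact {u : Kˣ | ‖(u : K)‖ ∈ Set.Icc r R} := by
  have himage : (↑) '' {u : Kˣ | ‖(u : K)‖ ∈ Set.Icc r R} =
      Metric.closedBall (0 : K) R \ Metric.ball 0 r := by
    ext x
    simp only [Set.mem_image, Set.mem_ofPred_eq, Set.mem_Icc, Set.mem_sdiff,
      mem_closedBall_zero_iff, mem_ball_zero_iff, not_lt]
    constructor
    · rintro ⟨u, hu, rfl⟩
      exact hu.symm
    · rintro ⟨hR, hr'⟩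
      exact ⟨Units.mk0 x (norm_pos_iff.1 (hr.trans_le hr')), ⟨hr', hR⟩, rfl⟩
  rw [Units.isEmbedding_val₀.isCompact_iff, himage]
  exact (isCompact_closedBall 0 R).diff Metric.isOpen_ball

variable (K) in
theorem exists_norm_mul_pow_mem_Icc {n : ℕ} (hn : n ≠ 0) :
    ∃ R : ℝ, ∀ u : Kˣ, ∃ v : Kˣ, ‖(u * v ^ n : K)‖ ∈ Set.Icc 1 R := by
  obtain ⟨c, hc⟩ := NormedField.exists_one_lt_norm K
  have hc0 : c ≠ 0 := norm_pos_iff.1 (one_pos.trans hc)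
  have hcn : 1 < ‖c‖ ^ n := one_lt_pow₀ hc hn
  refine ⟨‖c‖ ^ n, fun u => ?_⟩
  obtain ⟨m, hle, hlt⟩ := exists_mem_Ico_zpow (norm_pos_iff.2 u.ne_zero) hcn
  have hpos : 0 < (‖c‖ ^ n) ^ m := zpow_pos (one_pos.trans hcn) m
  refine ⟨Units.mk0 c hc0 ^ (-m), ?_⟩
  have hnorm : ‖(u * (Units.mk0 c hc0 ^ (-m) : Kˣ) ^ n : K)‖ = ‖(u : K)‖ / (‖c‖ ^ n) ^ m := by
    simp [← zpow_natCast, ← zpow_mul, mul_comm, div_eq_mul_inv]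
  rw [hnorm, Set.mem_Icc, one_le_div hpos, div_le_iff₀ hpos, ← zpow_one_add₀ (by positivity),
    add_comm]
  exact ⟨hle, hlt.le⟩

theorem finiteIndex_range_powMonoidHom_units [ProperSpace K] {n : ℕ} (hn : (n : K) ≠ 0) :
    (powMonoidHom n : Kˣ →* Kˣ).range.FiniteIndex := by
  obtain ⟨R, hR⟩ := exists_norm_mul_pow_mem_Icc K (n := n) (by rintro rfl; simp at hn)
  have : DiscreteTopology (Kˣ ⧸ (powMonoidHom n : Kˣ →* Kˣ).range) :=
    QuotientGroup.discreteTopology (isOpen_range_powMonoidHom_units hn)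
  have hcompact := (isCompact_units_norm_mem_Icc (K := K) one_pos R).image
    (QuotientGroup.continuous_mk (N := (powMonoidHom n : Kˣ →* Kˣ).range))
  have hcover : QuotientGroup.mk (s := (powMonoidHom n : Kˣ →* Kˣ).range) ''
      {u : Kˣ | ‖(u : K)‖ ∈ Set.Icc 1 R} = Set.univ := by
    refine Set.eq_univ_of_forall fun q => ?_
    obtain ⟨u, rfl⟩ := QuotientGroup.mk_surjective q
    obtain ⟨v, hv⟩ := hR u
    exact ⟨u * v ^ n, by simpa using hv, QuotientGroup.mk_mul_of_mem u ⟨v, rfl⟩⟩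
  rw [hcover] at hcompact
  rw [Subgroup.finiteIndex_iff_finite_quotient]
  exact Set.finite_univ_iff.1 hcompact.finite_of_discrete

theorem finiteIndex_range_powMonoidHom_units_of_padic (p : ℕ) [Fact p.Prime]
    (K : Type*) [Field K] [Algebra ℚ_[p] K] [FiniteDimensional ℚ_[p] K] {n : ℕ} (hn : n ≠ 0) :
    (powMonoidHom n : Kˣ →* Kˣ).range.FiniteIndex := by
  let _ : NontriviallyNormedField K := spectralNorm.nontriviallyNormedField ℚ_[p] K
  let _ : NormedAlgebra ℚ_[p] K := spectralNorm.normedAlgebra ℚ_[p] K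
  have : ProperSpace K := FiniteDimensional.proper ℚ_[p] K
  have : CharZero K := charZero_of_injective_algebraMap (algebraMap ℚ_[p] K).injective
  exact finiteIndex_range_powMonoidHom_units (Nat.cast_ne_zero.2 hn)

end PowerClasses

/-! ### Solution of quartics by radicals -/

section Radicals

open IntermediateField

variable {F Ω : Type*} [Field F] [Field Ω] [Algebra F Ω] {E : IntermediateField F Ω}

/-- The extension of `E` generated over the base field by all `n`-th roots of all elements of
`E`. -/
def adjoinRoots (n : ℕ) (E : IntermediateField F Ω) : IntermediateField F Ω :=
  adjoin F {x | x ^ n ∈ E}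

theorem mem_adjoinRoots_of_pow_mem {n : ℕ} {x : Ω} (hx : x ^ n ∈ E) : x ∈ adjoinRoots n E :=
  subset_adjoin F {x | x ^ n ∈ E} hx

theorem le_adjoinRoots (n : ℕ) (E : IntermediateField F Ω) : E ≤ adjoinRoots n E :=
  fun _ hx => mem_adjoinRoots_of_pow_mem (pow_mem hx n)

variable [CharZero Ω]

theorem mem_adjoinRoots_of_quadratic {a b x : Ω} (ha : a ∈ E) (hb : b ∈ E)
    (hx : x ^ 2 + a * x + b = 0) : x ∈ adjoinRoots 2 E := by
  have ha2 : a / 2 ∈ E := div_mem ha (ofNat_mem E 2)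
  have hsquare : (x + a / 2) ^ 2 = (a / 2) ^ 2 - b := by linear_combination hx
  have hroot : x + a / 2 ∈ adjoinRoots 2 E :=
    mem_adjoinRoots_of_pow_mem (hsquare ▸ sub_mem (pow_mem ha2 2) hb)
  exact (add_mem_cancel_right (le_adjoinRoots 2 E ha2)).1 hroot

variable [IsAlgClosed Ω]

-- Cardano: with `z ^ 2 - y * z = p / 3`, both `z ^ 3` and `(y - z) ^ 3` are roots of
-- `w ^ 2 + q * w - (p / 3) ^ 3`.
theorem mem_adjoinRoots_of_depressed_cubic {p q y : Ω} (hp : p ∈ E) (hq : q ∈ E)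
    (hy : y ^ 3 + p * y + q = 0) : y ∈ adjoinRoots 3 (adjoinRoots 2 E) := by
  obtain ⟨s, hs⟩ := IsAlgClosed.exists_pow_nat_eq (y ^ 2 / 4 + p / 3) two_pos
  obtain ⟨z, hz⟩ : ∃ z, z ^ 2 - y * z = p / 3 := ⟨y / 2 + s, by linear_combination hs⟩
  have hresolvent : (z ^ 3) ^ 2 + q * z ^ 3 + (-(p / 3) ^ 3) = 0 := by
    have hp' : p = 3 * (z ^ 2 - y * z) := by linear_combination (-3) * hz
    have hq' : q = -y ^ 3 - p * y := by linear_combination hy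
    rw [hq', hp']
    ring
  have hz3 : z ^ 3 ∈ adjoinRoots 2 E := mem_adjoinRoots_of_quadratic hq
    (neg_mem (pow_mem (div_mem hp (ofNat_mem E 3)) 3)) hresolvent
  have hyz3 : (y - z) ^ 3 ∈ adjoinRoots 2 E := by
    have hsum : (y - z) ^ 3 = -q - z ^ 3 := by linear_combination hy + 3 * y * hz
    exact hsum ▸ sub_mem (le_adjoinRoots 2 E (neg_mem hq)) hz3
  simpa only [sub_add_cancel] using
    add_mem (mem_adjoinRoots_of_pow_mem hyz3) (mem_adjoinRoots_of_pow_mem hz3)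

theorem mem_adjoinRoots_of_cubic {a b c x : Ω} (ha : a ∈ E) (hb : b ∈ E) (hc : c ∈ E)
    (hx : x ^ 3 + a * x ^ 2 + b * x + c = 0) : x ∈ adjoinRoots 3 (adjoinRoots 2 E) := by
  have ha3 : a / 3 ∈ E := div_mem ha (ofNat_mem E 3)
  have hp : b - 3 * (a / 3) ^ 2 ∈ E := sub_mem hb (mul_mem (ofNat_mem E 3) (pow_mem ha3 2))
  have hq : 2 * (a / 3) ^ 3 - a / 3 * b + c ∈ E :=
    add_mem (sub_mem (mul_mem (ofNat_mem E 2) (pow_mem ha3 3)) (mul_mem ha3 hb)) hc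
  have hroot : x + a / 3 ∈ adjoinRoots 3 (adjoinRoots 2 E) :=
    mem_adjoinRoots_of_depressed_cubic hp hq (by linear_combination hx)
  exact (add_mem_cancel_right (le_adjoinRoots 3 _ (le_adjoinRoots 2 E ha3))).1 hroot

-- Ferrari: `s ^ 2` is a root of the resolvent cubic exactly when the quartic splits into
-- quadratics with linear coefficients `s` and `-s`.
theorem depressed_quartic_eq_mul {K : Type*} [Field K] [CharZero K] {p q r s : K} (hs : s ≠ 0)
    (hresolvent : (s ^ 2) ^ 3 + 2 * p * (s ^ 2) ^ 2 + (p ^ 2 - 4 * r) * s ^ 2 + -q ^ 2 = 0)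
    (y : K) :
    y ^ 4 + p * y ^ 2 + q * y + r =
      (y ^ 2 + s * y + (p + s ^ 2 - q / s) / 2) *
        (y ^ 2 + -s * y + (p + s ^ 2 + q / s) / 2) := by
  field_simp
  linear_combination (-1) * hresolvent

theorem exists_resolvent_root {K : Type*} [Field K] [IsAlgClosed K] (p q r : K) :
    ∃ s : K, (s ^ 2) ^ 3 + 2 * p * (s ^ 2) ^ 2 + (p ^ 2 - 4 * r) * s ^ 2 + -q ^ 2 = 0 := by
  have hdeg := Polynomial.degree_cubic (b := 2 * p) (c := p ^ 2 - 4 * r) (d := -q ^ 2)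
    (one_ne_zero (α := K))
  obtain ⟨t, ht⟩ := IsAlgClosed.exists_root _ (hdeg.trans_ne three_ne_zero)
  obtain ⟨s, rfl⟩ := IsAlgClosed.exists_pow_nat_eq t two_pos
  exact ⟨s, by simpa [Polynomial.IsRoot] using ht⟩

theorem mem_adjoinRoots_of_depressed_quartic {p q r y : Ω} (hp : p ∈ E) (hq : q ∈ E)
    (hr : r ∈ E) (hy : y ^ 4 + p * y ^ 2 + q * y + r = 0) :
    y ∈ adjoinRoots 2 (adjoinRoots 2 (adjoinRoots 3 (adjoinRoots 2 E))) := by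
  obtain ⟨s, hs⟩ := exists_resolvent_root p q r
  have hs2 : s ^ 2 ∈ adjoinRoots 3 (adjoinRoots 2 E) := mem_adjoinRoots_of_cubic
    (mul_mem (ofNat_mem E 2) hp) (sub_mem (pow_mem hp 2) (mul_mem (ofNat_mem E 4) hr))
    (neg_mem (pow_mem hq 2)) hs
  have hsmem : s ∈ adjoinRoots 2 (adjoinRoots 3 (adjoinRoots 2 E)) :=
    mem_adjoinRoots_of_pow_mem hs2
  have hle2 : adjoinRoots 2 E ≤ adjoinRoots 2 (adjoinRoots 3 (adjoinRoots 2 E)) :=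
    (le_adjoinRoots 3 _).trans (le_adjoinRoots 2 _)
  have hle := (le_adjoinRoots 2 E).trans hle2
  by_cases hs0 : s = 0
  · have hq0 : q = 0 := by simpa [hs0] using hs
    have hy2 : y ^ 2 ∈ adjoinRoots 2 E := by
      refine mem_adjoinRoots_of_quadratic hp hr ?_
      rw [hq0] at hy
      linear_combination hy
    exact mem_adjoinRoots_of_pow_mem (hle2 hy2)
  · have hps := add_mem (hle hp) (pow_mem hsmem 2)
    have hqs := div_mem (hle hq) hsmem
    rw [depressed_quartic_eq_mul hs0 hs] at hy
    rcases mul_eq_zero.1 hy with hroot | hroot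
    · exact mem_adjoinRoots_of_quadratic hsmem
        (div_mem (sub_mem hps hqs) (ofNat_mem _ 2)) hroot
    · exact mem_adjoinRoots_of_quadratic (neg_mem hsmem)
        (div_mem (add_mem hps hqs) (ofNat_mem _ 2)) hroot

theorem mem_adjoinRoots_of_quartic {a b c d x : Ω} (ha : a ∈ E) (hb : b ∈ E) (hc : c ∈ E)
    (hd : d ∈ E) (hx : x ^ 4 + a * x ^ 3 + b * x ^ 2 + c * x + d = 0) :
    x ∈ adjoinRoots 2 (adjoinRoots 2 (adjoinRoots 3 (adjoinRoots 2 E))) := by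
  have ha4 : a / 4 ∈ E := div_mem ha (ofNat_mem E 4)
  have hp : b - 6 * (a / 4) ^ 2 ∈ E := sub_mem hb (mul_mem (ofNat_mem E 6) (pow_mem ha4 2))
  have hq : 8 * (a / 4) ^ 3 - 2 * (a / 4 * b) + c ∈ E :=
    add_mem (sub_mem (mul_mem (ofNat_mem E 8) (pow_mem ha4 3))
      (mul_mem (ofNat_mem E 2) (mul_mem ha4 hb))) hc
  have hr : (a / 4) ^ 2 * b - 3 * (a / 4) ^ 4 - a / 4 * c + d ∈ E :=
    add_mem (sub_mem (sub_mem (mul_mem (pow_mem ha4 2) hb)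
      (mul_mem (ofNat_mem E 3) (pow_mem ha4 4))) (mul_mem ha4 hc)) hd
  have hroot := mem_adjoinRoots_of_depressed_quartic (y := x + a / 4) hp hq hr
    (by linear_combination hx)
  have hle : E ≤ adjoinRoots 2 (adjoinRoots 2 (adjoinRoots 3 (adjoinRoots 2 E))) :=
    (le_adjoinRoots 2 _).trans ((le_adjoinRoots 3 _).trans
      ((le_adjoinRoots 2 _).trans (le_adjoinRoots 2 _)))
  exact (add_mem_cancel_right (hle ha4)).1 hroot

theorem le_adjoinRoots_of_finrank_eq_four {L : IntermediateField F Ω}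
    (hL : Module.finrank F L = 4) :
    L ≤ adjoinRoots 2 (adjoinRoots 2 (adjoinRoots 3 (adjoinRoots 2 ⊥))) := by
  intro x hx
  have : FiniteDimensional F L := .of_finrank_pos (by omega)
  set P := (Algebra.lmul F L ⟨x, hx⟩).charpoly
  have hdegree : P.natDegree = 4 := (LinearMap.charpoly_natDegree _).trans hL
  have hlead : P.coeff 4 = 1 := hdegree ▸ (LinearMap.charpoly_monic _).coeff_natDegree
  have hroot : Polynomial.aeval x P = 0 := by
    have hrootL : Polynomial.aeval (⟨x, hx⟩ : L) P = 0 := Algebra.aeval_self_charpoly_lmul _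
    exact (Polynomial.aeval_algebraMap_apply Ω (⟨x, hx⟩ : L) P).trans (by rw [hrootL, map_zero])
  rw [Polynomial.aeval_eq_sum_range, hdegree] at hroot
  have hcoeff (i : ℕ) : algebraMap F Ω (P.coeff i) ∈ (⊥ : IntermediateField F Ω) :=
    IntermediateField.algebraMap_mem ⊥ (P.coeff i)
  simp only [Finset.sum_range_succ, Finset.sum_range_zero, hlead, Algebra.smul_def, map_one]
    at hroot
  exact mem_adjoinRoots_of_quartic (hcoeff 3) (hcoeff 2) (hcoeff 1) (hcoeff 0)
    (by linear_combination hroot)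
end Radicals

/-! ### Finiteness of the set of quartic extensions -/

section Finiteness

open IntermediateField

theorem finite_setOf_pow_eq {R : Type*} [CommRing R] [IsDomain R] {n : ℕ} (hn : n ≠ 0) (a : R) :
    {x : R | x ^ n = a}.Finite := by
  classical
  refine (Polynomial.nthRoots n a).toFinset.finite_toSet.subset fun x hx => ?_
  simpa [Polynomial.mem_nthRoots (Nat.pos_of_ne_zero hn)] using hx

-- Multiplying `x` by a suitable element of `E` turns `x ^ n` into one of finitely many
-- representatives of the power classes of `E`.
theorem finiteDimensional_adjoinRoots {F Ω : Type*} [Field F] [Field Ω] [Algebra F Ω]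
    [Algebra.IsAlgebraic F Ω] {n : ℕ} (hn : n ≠ 0) (E : IntermediateField F Ω)
    [FiniteDimensional F E] [(powMonoidHom n : Eˣ →* Eˣ).range.FiniteIndex] :
    FiniteDimensional F (adjoinRoots n E) := by
  let T : Set Ω := ⋃ q : Eˣ ⧸ (powMonoidHom n : Eˣ →* Eˣ).range, {x | x ^ n = (q.out : Eˣ)}
  have : Finite T := Set.finite_iUnion fun q => finite_setOf_pow_eq hn _
  have : FiniteDimensional F (adjoin F T) :=
    finiteDimensional_adjoin fun x _ => Algebra.IsIntegral.isIntegral x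
  suffices hle : adjoinRoots n E ≤ E ⊔ adjoin F T from
    FiniteDimensional.of_injective (inclusion hle).toLinearMap (inclusion hle).injective
  refine adjoin_le_iff.2 fun x hx => ?_
  rcases eq_or_ne x 0 with rfl | hx0
  · exact zero_mem _
  let u : Eˣ := Units.mk0 ⟨x ^ n, hx⟩ (by simpa [Subtype.ext_iff] using pow_ne_zero n hx0)
  obtain ⟨⟨_, v, rfl⟩, hv⟩ :=
    QuotientGroup.mk_out_eq_mul (powMonoidHom n : Eˣ →* Eˣ).range u
  have hxv : x * (v : E) ∈ T := Set.mem_iUnion.2 ⟨u, by simp [hv, u, mul_pow]⟩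
  have hvE : ((v : E) : Ω) ∈ E ⊔ adjoin F T :=
    (le_sup_left : E ≤ E ⊔ adjoin F T) (v : E).2
  have hxvE : x * (v : E) ∈ E ⊔ adjoin F T :=
    (le_sup_right : adjoin F T ≤ _) (subset_adjoin F T hxv)
  have hv0 : ((v : E) : Ω) ≠ 0 := by simp
  simpa [hv0] using div_mem hxvE hvE

theorem finiteDimensional_adjoinRoots_of_padic (p : ℕ) [Fact p.Prime] {F Ω : Type*} [Field F]
    [Algebra ℚ_[p] F] [FiniteDimensional ℚ_[p] F] [Field Ω] [Algebra F Ω]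
    [Algebra.IsAlgebraic F Ω] {n : ℕ} (hn : n ≠ 0) (E : IntermediateField F Ω)
    [FiniteDimensional F E] : FiniteDimensional F (adjoinRoots n E) := by
  let _ : Algebra ℚ_[p] E := Algebra.compHom E (algebraMap ℚ_[p] F)
  have : IsScalarTower ℚ_[p] F E := .of_algebraMap_eq' rfl
  have : FiniteDimensional ℚ_[p] E := FiniteDimensional.trans ℚ_[p] F E
  have := finiteIndex_range_powMonoidHom_units_of_padic p E hn
  exact finiteDimensional_adjoinRoots hn E

theorem finite_setOf_intermediateField_le {F Ω : Type*} [Field F] [PerfectField F] [Field Ω]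
    [Algebra F Ω] (M : IntermediateField F Ω) [FiniteDimensional F M] :
    {L : IntermediateField F Ω | L ≤ M}.Finite := by
  have : Finite (IntermediateField F M) :=
    (Field.exists_primitive_element_iff_finite_intermediateField F M).1
      ⟨inferInstance, Field.exists_primitive_element F M⟩
  refine (Set.finite_range (lift : IntermediateField F M → IntermediateField F Ω)).subset ?_
  exact fun L hL => ⟨restrict hL, lift_restrict hL⟩

theorem finite_finrank_eq_four_of_padic (p : ℕ) [Fact p.Prime] (F : Type*) [Field F]
    [Algebra ℚ_[p] F] [FiniteDimensional ℚ_[p] F] (Ω : Type*) [Field Ω] [Algebra F Ω]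
    [IsAlgClosure F Ω] : Finite {L : IntermediateField F Ω // Module.finrank F L = 4} := by
  have : CharZero F := charZero_of_injective_algebraMap (algebraMap ℚ_[p] F).injective
  have : CharZero Ω := charZero_of_injective_algebraMap (algebraMap F Ω).injective
  have : IsAlgClosed Ω := IsAlgClosure.isAlgClosed F
  have : Algebra.IsAlgebraic F Ω := IsAlgClosure.isAlgebraic
  have hroots {n : ℕ} (hn : n ≠ 0) (E : IntermediateField F Ω) [FiniteDimensional F E] :
      FiniteDimensional F (adjoinRoots n E) := finiteDimensional_adjoinRoots_of_padic p hn E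
  have := hroots two_ne_zero (⊥ : IntermediateField F Ω)
  have := hroots three_ne_zero (adjoinRoots 2 (⊥ : IntermediateField F Ω))
  have := hroots two_ne_zero (adjoinRoots 3 (adjoinRoots 2 (⊥ : IntermediateField F Ω)))
  have := hroots two_ne_zero (adjoinRoots 2 (adjoinRoots 3 (adjoinRoots 2
    (⊥ : IntermediateField F Ω))))
  exact (finite_setOf_intermediateField_le _).subset fun _ => le_adjoinRoots_of_finrank_eq_four

end Finiteness

theorem stmt13_general (F : Type*) [Field F] [PerfectField F]
    [Finite {L : IntermediateField F (AlgebraicClosure F) // Module.finrank F L = 4}] :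
    Nat.card {L : IntermediateField F (AlgebraicClosure F) // Module.finrank F L = 4} =
      Nat.card {L : IntermediateField F (AlgebraicClosure F) //
        Module.finrank F L = 4 ∧ IsGalois F L ∧
          ∀ σ τ : L ≃ₐ[F] L, σ * τ = τ * σ} +
      4 * nu F (DihedralGroup 4) +
      4 * nu F (alternatingGroup (Fin 4)) +
      4 * nu F (Equiv.Perm (Fin 4)) := by
  have habelian := Nat.card_congr <| Equiv.subtypeEquivRight fun
    L : IntermediateField F (AlgebraicClosure F) =>
      and_congr_right (finrank_normalClosure_eq_four_iff (L := L))
  have hdihedral := card_finrank_normalClosure_eq_card (F := F) (Ω := AlgebraicClosure F)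
    (card_coreFreeSubgroups_dihedral (n := 4) (by norm_num))
    (by rw [DihedralGroup.nat_card]; norm_num)
  have halternating := card_finrank_normalClosure_eq_card (F := F) (Ω := AlgebraicClosure F)
    card_coreFreeSubgroups_alternating_four (by rw [card_alternatingGroup_fin_four]; norm_num)
  have hperm := card_finrank_normalClosure_eq_card (F := F) (Ω := AlgebraicClosure F)
    card_coreFreeSubgroups_perm_four (by rw [card_perm_fin_four]; norm_num)
  rw [DihedralGroup.nat_card] at hdihedral
  rw [card_alternatingGroup_fin_four] at halternating
  rw [card_perm_fin_four] at hperm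
  rw [card_eq_sum_card_fiber fun L => finrank_normalClosure_mem (L := L),
    Finset.sum_insert (by decide), Finset.sum_insert (by decide), Finset.sum_insert (by decide),
    Finset.sum_singleton, habelian, hdihedral, halternating, hperm]
  simp only [nu, HasGaloisGroup, add_assoc]

/-- `DihedralGroup 4` is the dihedral group of order 8 (a 2-Sylow subgroup of `S₄`). -/
theorem stmt13 (p : ℕ) [Fact p.Prime]
    (F : Type*) [Field F] [Algebra ℚ_[p] F] [FiniteDimensional ℚ_[p] F] :
    Nat.card {L : IntermediateField F (AlgebraicClosure F) // Module.finrank F L = 4} =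
      Nat.card {L : IntermediateField F (AlgebraicClosure F) //
        Module.finrank F L = 4 ∧ IsGalois F L ∧
          ∀ σ τ : L ≃ₐ[F] L, σ * τ = τ * σ} +
      4 * nu F (DihedralGroup 4) +
      4 * nu F (alternatingGroup (Fin 4)) +
      4 * nu F (Equiv.Perm (Fin 4)) := by
  have : CharZero F := charZero_of_injective_algebraMap (algebraMap ℚ_[p] F).injective
  have := finite_finrank_eq_four_of_padic p F (AlgebraicClosure F)
  exact stmt13_general F
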